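/- Suppose F : X → ℝ is L_W-smooth; the E-epoch FLT iterates (W^t)_{t=0}^{T} in X satisfy W^t − W^{t−1} = −η Ā ∇F(W^{t−1}) for all 1 ≤ t ≤ T with step size η > 0, together with the per-step gradient-deviation bound ‖(I_M − Ā)·∇F(W^{t−1})‖ ≤ L_W · a · ‖W^t − W^{t−1}‖ for all 1 ≤ t ≤ T, where a is the operator norm of V ↦ (I_M − Ā)V on X, and c := 1/(2η) − L_W/2 − (η/2)·L_W²·a² > 0. Suppose further there exist real numbers F₀*, F_T* and B₁, B₂ ≥ 0 (the local gradient-descent bounds over E local epochs, with B₁ = ‖W^{1,0} − W^{1,*}‖² and B₂ = ‖W^{T,0} − W^{T,*}‖²) such that 0 ≤ F(W^0) − F₀* ≤ B₁/(2ηE) and 0 ≤ F(W^T) − F_T* ≤ B₂/(2ηE) for a real E > 0. Then (1/(T·M)) · Σ_{t=1}^{T} ‖W^t − W^{t−1}‖² ≤ (B₁ + B₂ + 2ηE·(F₀* − F_T*)) / (2ηE · T · M · c). (Equation (9) of Appendix B.2: the elaborate convergence bound on the optimality gap of FLT incorporating the number of local epochs E.) -/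

import Mathlib

open scoped RealInnerProductSpace

/-- Left multiplication by an `M × M` matrix `A` on the space of `M × d` real matrices,
realized as the Euclidean space `EuclideanSpace ℝ (Fin M × Fin d)` (with the Frobenius
inner product), via the Kronecker product `A ⊗ I_d`. -/
noncomputable def matLeftMul (M d : ℕ) (A : Matrix (Fin M) (Fin M) ℝ) :
    EuclideanSpace ℝ (Fin M × Fin d) →L[ℝ] EuclideanSpace ℝ (Fin M × Fin d) :=
  LinearMap.toContinuousLinearMap
    (Matrix.toEuclideanLin (Matrix.kroneckerMap (· * ·) A (1 : Matrix (Fin d) (Fin d) ℝ)))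

/-! The update direction `Ā∇F` is treated as an inexact gradient `p` whose error `∇F - p` is
controlled by the length of the step it produces. Writing the first-order term of the descent
lemma as `⟪∇F, s⟫ = ⟪∇F - p, s⟫ - ‖s‖² / η` for the step `s = -ηp`, and splitting `⟪∇F - p, s⟫` by
Young's inequality with weight `η`, leaves a decrease of `F` by at least `c ‖s‖²` per round. The
decreases telescope to `F(W⁰) - F(Wᵀ)`. -/

theorem matLeftMul_sub (M d : ℕ) (A B : Matrix (Fin M) (Fin M) ℝ) :
    matLeftMul M d (A - B) = matLeftMul M d A - matLeftMul M d B := by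
  have kronecker_sub : Matrix.kroneckerMap (· * ·) (A - B) (1 : Matrix (Fin d) (Fin d) ℝ) =
      Matrix.kroneckerMap (· * ·) A 1 - Matrix.kroneckerMap (· * ·) B 1 :=
    Matrix.ext fun _ _ => sub_mul _ _ _
  simp only [matLeftMul, kronecker_sub, map_sub]

theorem matLeftMul_one (M d : ℕ) : matLeftMul M d 1 = ContinuousLinearMap.id ℝ _ := by
  ext v
  simp [matLeftMul]

theorem matLeftMul_one_sub_apply (M d : ℕ) (A : Matrix (Fin M) (Fin M) ℝ)
    (v : EuclideanSpace ℝ (Fin M × Fin d)) :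
    matLeftMul M d (1 - A) v = v - matLeftMul M d A v := by
  simp only [matLeftMul_sub, matLeftMul_one, sub_apply, ContinuousLinearMap.id_apply]

theorem sum_Icc_one_pred_sub {G : Type*} [AddCommGroup G] (f : ℕ → G) (n : ℕ) :
    ∑ t ∈ Finset.Icc 1 n, (f (t - 1) - f t) = f 0 - f n := by
  rw [← Finset.Ico_add_one_right_eq_Icc, Finset.sum_Ico_eq_sum_range]
  simpa [add_comm 1] using Finset.sum_range_sub' f n

section InexactGradientDescent

variable {X : Type*} [NormedAddCommGroup X] [InnerProductSpace ℝ X]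

theorem real_inner_le_half_mul_sq_add_sq_div {η : ℝ} (hη : 0 < η) (u v : X) :
    ⟪u, v⟫ ≤ η / 2 * ‖u‖ ^ 2 + ‖v‖ ^ 2 / (2 * η) := by
  have young : 2 * ‖u‖ * ‖v‖ ≤ η * ‖u‖ ^ 2 + η⁻¹ * ‖v‖ ^ 2 := two_mul_le_add_mul_sq hη
  calc ⟪u, v⟫ ≤ ‖u‖ * ‖v‖ := real_inner_le_norm u v
    _ ≤ (η * ‖u‖ ^ 2 + η⁻¹ * ‖v‖ ^ 2) / 2 := by linarith
    _ = η / 2 * ‖u‖ ^ 2 + ‖v‖ ^ 2 / (2 * η) := by field_simp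

variable [CompleteSpace X] {F : X → ℝ} {gradF : X → X} {L η : ℝ}

theorem hasDerivAt_comp_lineMap_of_hasGradientAt {f : X → ℝ} {f' x y : X} {t : ℝ}
    (hf : HasGradientAt f f' (AffineMap.lineMap x y t)) :
    HasDerivAt (fun r : ℝ => f (AffineMap.lineMap x y r)) ⟪f', y - x⟫ t := by
  simpa [Function.comp_def] using
    hf.hasFDerivAt.comp_hasDerivAt t AffineMap.hasDerivAt_lineMap

theorem le_add_inner_add_sq_of_forall_mem_segment {x y : X}
    (hF : ∀ z ∈ segment ℝ x y, HasGradientAt F (gradF z) z)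
    (hL : ∀ z ∈ segment ℝ x y, ‖gradF z - gradF x‖ ≤ L * ‖z - x‖) :
    F y ≤ F x + ⟪gradF x, y - x⟫ + L / 2 * ‖y - x‖ ^ 2 := by
  let φ : ℝ → ℝ := fun t => F (AffineMap.lineMap x y t)
  let φ' : ℝ → ℝ := fun t => ⟪gradF (AffineMap.lineMap x y t), y - x⟫
  let Q : ℝ → ℝ := fun t => F x + t * ⟪gradF x, y - x⟫ + L / 2 * ‖y - x‖ ^ 2 * t ^ 2
  let Q' : ℝ → ℝ := fun t => ⟪gradF x, y - x⟫ + L * ‖y - x‖ ^ 2 * t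
  have hφ : ∀ t ∈ Set.Icc (0 : ℝ) 1, HasDerivAt φ (φ' t) t := fun t ht =>
    hasDerivAt_comp_lineMap_of_hasGradientAt (hF _ (lineMap_mem_segment ℝ x y ht))
  have hQ : ∀ t, HasDerivAt Q (Q' t) t := fun t =>
    ((((hasDerivAt_id t).mul_const ⟪gradF x, y - x⟫).const_add (F x)).add
      ((hasDerivAt_pow 2 t).const_mul (L / 2 * ‖y - x‖ ^ 2))).congr_deriv (by
        simp only [Q', Nat.cast_ofNat]; ring)
  have hφQ : ∀ t ∈ Set.Ico (0 : ℝ) 1, φ' t ≤ Q' t := fun t ht => by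
    have grad_diff_le : ‖gradF (AffineMap.lineMap x y t) - gradF x‖ ≤ L * (t * ‖y - x‖) := by
      simpa [AffineMap.lineMap_apply, norm_smul, abs_of_nonneg ht.1] using
        hL _ (lineMap_mem_segment ℝ x y (Set.Ico_subset_Icc_self ht))
    calc φ' t = ⟪gradF x, y - x⟫ + ⟪gradF (AffineMap.lineMap x y t) - gradF x, y - x⟫ := by
          rw [inner_sub_left, add_sub_cancel]
      _ ≤ ⟪gradF x, y - x⟫ + L * (t * ‖y - x‖) * ‖y - x‖ := by
          gcongr
          exact (real_inner_le_norm _ _).trans (by gcongr)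
      _ = Q' t := by simp only [Q']; ring
  have φ_one_le : φ 1 ≤ Q 1 := image_le_of_deriv_right_le_deriv_boundary
    (fun t ht => (hφ t ht).continuousAt.continuousWithinAt)
    (fun t ht => (hφ t (Set.Ico_subset_Icc_self ht)).hasDerivWithinAt) (by simp [φ, Q])
    (fun t _ => (hQ t).continuousAt.continuousWithinAt) (fun t _ => (hQ t).hasDerivWithinAt)
    hφQ (Set.right_mem_Icc.2 zero_le_one)
  simpa [φ, Q] using φ_one_le

theorem mul_sq_norm_sub_le_of_inexact_gradient_step
    (hF : ∀ x, HasGradientAt F (gradF x) x)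
    (hL : ∀ x y, ‖gradF x - gradF y‖ ≤ L * ‖x - y‖)
    (hη : 0 < η) {κ : ℝ} {x y p : X} (hstep : y - x = -(η • p))
    (hκ : ‖gradF x - p‖ ≤ κ * ‖y - x‖) :
    (1 / (2 * η) - L / 2 - η / 2 * κ ^ 2) * ‖y - x‖ ^ 2 ≤ F x - F y := by
  have descent : F y ≤ F x + ⟪gradF x, y - x⟫ + L / 2 * ‖y - x‖ ^ 2 :=
    le_add_inner_add_sq_of_forall_mem_segment (fun z _ => hF z) (fun z _ => hL z x)
  have inner_step : ⟪p, y - x⟫ = -(‖y - x‖ ^ 2 / η) := by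
    rw [← real_inner_self_eq_norm_sq]
    nth_rewrite 2 [hstep]
    rw [inner_neg_left, real_inner_smul_left]
    field_simp
  have inner_grad : ⟪gradF x, y - x⟫ = ⟪gradF x - p, y - x⟫ - ‖y - x‖ ^ 2 / η := by
    rw [inner_sub_left, inner_step]
    ring
  have inner_error : ⟪gradF x - p, y - x⟫ ≤
      η / 2 * (κ * ‖y - x‖) ^ 2 + ‖y - x‖ ^ 2 / (2 * η) :=
    (real_inner_le_half_mul_sq_add_sq_div hη _ _).trans (by gcongr)
  calc (1 / (2 * η) - L / 2 - η / 2 * κ ^ 2) * ‖y - x‖ ^ 2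
      = ‖y - x‖ ^ 2 / η - (η / 2 * (κ * ‖y - x‖) ^ 2 + ‖y - x‖ ^ 2 / (2 * η))
          - L / 2 * ‖y - x‖ ^ 2 := by field_simp; ring
    _ ≤ F x - F y := by linarith

theorem mul_sum_sq_norm_sub_le_of_inexact_gradient_descent
    (hF : ∀ x, HasGradientAt F (gradF x) x)
    (hL : ∀ x y, ‖gradF x - gradF y‖ ≤ L * ‖x - y‖)
    (hη : 0 < η) {κ : ℝ} {T : ℕ} {W p : ℕ → X}
    (hstep : ∀ t, 1 ≤ t → t ≤ T → W t - W (t - 1) = -(η • p t))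
    (hκ : ∀ t, 1 ≤ t → t ≤ T → ‖gradF (W (t - 1)) - p t‖ ≤ κ * ‖W t - W (t - 1)‖) :
    (1 / (2 * η) - L / 2 - η / 2 * κ ^ 2) * ∑ t ∈ Finset.Icc 1 T, ‖W t - W (t - 1)‖ ^ 2 ≤
      F (W 0) - F (W T) := by
  rw [Finset.mul_sum, ← sum_Icc_one_pred_sub (fun t => F (W t))]
  refine Finset.sum_le_sum fun t ht => ?_
  obtain ⟨one_le, le_T⟩ := Finset.mem_Icc.1 ht
  exact mul_sq_norm_sub_le_of_inexact_gradient_step hF hL hη (hstep t one_le le_T)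
    (hκ t one_le le_T)

theorem flt_convergence_with_local_epochs_general
    (hF : ∀ x, HasGradientAt F (gradF x) x)
    (hL : ∀ x y, ‖gradF x - gradF y‖ ≤ L * ‖x - y‖)
    (hη : 0 < η) {κ : ℝ} {T : ℕ} {W p : ℕ → X}
    (hstep : ∀ t, 1 ≤ t → t ≤ T → W t - W (t - 1) = -(η • p t))
    (hκ : ∀ t, 1 ≤ t → t ≤ T → ‖gradF (W (t - 1)) - p t‖ ≤ κ * ‖W t - W (t - 1)‖)
    {c : ℝ} (hc : c = 1 / (2 * η) - L / 2 - η / 2 * κ ^ 2) (hcpos : 0 < c)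
    {E : ℝ} (hE : 0 < E) {F₀star FTstar B₁ : ℝ}
    (h₀ : F (W 0) - F₀star ≤ B₁ / (2 * η * E)) (hTstar : FTstar ≤ F (W T)) :
    ∑ t ∈ Finset.Icc 1 T, ‖W t - W (t - 1)‖ ^ 2 ≤
      (B₁ + 2 * η * E * (F₀star - FTstar)) / (2 * η * E * c) := by
  have descent : c * ∑ t ∈ Finset.Icc 1 T, ‖W t - W (t - 1)‖ ^ 2 ≤ F (W 0) - F (W T) :=
    hc ▸ mul_sum_sq_norm_sub_le_of_inexact_gradient_descent hF hL hη hstep hκ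
  calc ∑ t ∈ Finset.Icc 1 T, ‖W t - W (t - 1)‖ ^ 2
      ≤ (B₁ / (2 * η * E) + (F₀star - FTstar)) / c := by
        rw [le_div_iff₀' hcpos]
        linarith
    _ = (B₁ + 2 * η * E * (F₀star - FTstar)) / (2 * η * E * c) := by field_simp

end InexactGradientDescent

/-- Equation (9) of Appendix B.2: the elaborate convergence bound on the optimality gap
of FLT incorporating the number of local epochs `E`. -/
theorem flt_convergence_with_local_epochs (M d T : ℕ) (hM : 1 ≤ M) (hd : 1 ≤ d) (hT : 1 ≤ T)
    (Abar : Matrix (Fin M) (Fin M) ℝ)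
    (F : EuclideanSpace ℝ (Fin M × Fin d) → ℝ)
    (gradF : EuclideanSpace ℝ (Fin M × Fin d) → EuclideanSpace ℝ (Fin M × Fin d))
    (hF : ∀ V, HasGradientAt F (gradF V) V)
    (LW : ℝ)
    (hsmooth : ∀ U V : EuclideanSpace ℝ (Fin M × Fin d),
      ‖gradF U - gradF V‖ ≤ LW * ‖U - V‖)
    (η : ℝ) (hη : 0 < η)
    (W : ℕ → EuclideanSpace ℝ (Fin M × Fin d))
    (hupd : ∀ t : ℕ, 1 ≤ t → t ≤ T →
      W t - W (t - 1) = -(η • matLeftMul M d Abar (gradF (W (t - 1)))))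
    (a : ℝ) (ha : a = ‖matLeftMul M d ((1 : Matrix (Fin M) (Fin M) ℝ) - Abar)‖)
    (hdev : ∀ t : ℕ, 1 ≤ t → t ≤ T →
      ‖matLeftMul M d ((1 : Matrix (Fin M) (Fin M) ℝ) - Abar) (gradF (W (t - 1)))‖ ≤
        LW * a * ‖W t - W (t - 1)‖)
    (c : ℝ) (hc : c = 1 / (2 * η) - LW / 2 - (η / 2) * LW ^ 2 * a ^ 2)
    (hcpos : 0 < c)
    (E : ℝ) (hE : 0 < E)
    (F₀star FTstar B₁ B₂ : ℝ) (hB₁ : 0 ≤ B₁) (hB₂ : 0 ≤ B₂)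
    (h₀ : 0 ≤ F (W 0) - F₀star) (h₀' : F (W 0) - F₀star ≤ B₁ / (2 * η * E))
    (hT' : 0 ≤ F (W T) - FTstar) (hT'' : F (W T) - FTstar ≤ B₂ / (2 * η * E)) :
    (1 / ((T : ℝ) * (M : ℝ))) * (∑ t ∈ Finset.Icc 1 T, ‖W t - W (t - 1)‖ ^ 2) ≤
      (B₁ + B₂ + 2 * η * E * (F₀star - FTstar)) /
        (2 * η * E * (T : ℝ) * (M : ℝ) * c) := by
  simp only [matLeftMul_one_sub_apply] at hdev
  have hsum := flt_convergence_with_local_epochs_general hF hsmooth hη hupd hdev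
    (by rw [hc]; ring) hcpos hE h₀' (sub_nonneg.1 hT')
  calc _ ≤ 1 / ((T : ℝ) * M) * ((B₁ + B₂ + 2 * η * E * (F₀star - FTstar)) / (2 * η * E * c)) := by
        gcongr; exact hsum.trans (by gcongr; linarith)
    _ = _ := by field_simp
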